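/- arXiv:math/0204108 — 4 statements merged into one kernel-verified Lean document; each statement's English description precedes it below -/
import Mathlib

section
/- Let λ and μ be real numbers with λ > 0. Then for every complex number z, the series ∑_{j=0}^{∞} z^j / Γ(λ·j + μ) is summable, where Γ denotes the complex Gamma function evaluated at the real argument λ·j + μ (with the convention that terms where Γ vanishes or has a pole are interpreted via the entire reciprocal 1/Γ, i.e. such terms are 0). -/
open Filter Topology in
theorem ml_gamma_lower (B : ℝ) (hB : 1 ≤ B) :
    ∀ᶠ x : ℝ in atTop, B ^ (x - 2) ≤ Real.Gamma x := by
  have h1 : ∀ᶠ n : ℕ in atTop, B ^ n / (n.factorial : ℝ) < 1 :=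
    (FloorSemiring.tendsto_pow_div_factorial_atTop B).eventually (gt_mem_nhds one_pos)
  obtain ⟨N, hN⟩ := eventually_atTop.1 h1
  filter_upwards [eventually_ge_atTop ((N : ℝ) + 3)] with x hx
  have hN0 : (0 : ℝ) ≤ N := Nat.cast_nonneg N
  have hx0 : 0 ≤ x := by linarith
  have hf : N + 3 ≤ ⌊x⌋₊ := Nat.le_floor (by push_cast; exact hx)
  obtain ⟨n, hn⟩ : ∃ n, ⌊x⌋₊ = n + 1 := ⟨⌊x⌋₊ - 1, by omega⟩
  have hle : ((n : ℝ) + 1) ≤ x := by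
    have := Nat.floor_le hx0
    rw [hn] at this; push_cast at this; exact this
  have hlt : x < (n : ℝ) + 2 := by
    have := Nat.lt_floor_add_one x
    rw [hn] at this; push_cast at this; linarith
  have hn2 : (1 : ℝ) ≤ n := by exact_mod_cast (by omega : 1 ≤ n)
  have hfac : B ^ n ≤ (n.factorial : ℝ) := by
    have := hN n (by omega)
    rw [div_lt_one (by positivity)] at this
    exact this.le
  calc B ^ (x - 2) ≤ B ^ (n : ℝ) := Real.rpow_le_rpow_of_exponent_le hB (by linarith)
    _ = B ^ n := Real.rpow_natCast B n
    _ ≤ n.factorial := hfac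
    _ = Real.Gamma (n + 1) := (Real.Gamma_nat_eq_factorial n).symm
    _ ≤ Real.Gamma x := Real.Gamma_strictMonoOn_Ici.monotoneOn
        (by simp only [Set.mem_Ici]; linarith) (by simp only [Set.mem_Ici]; linarith) hle

/-- The power series defining the two-parameter Mittag-Leffler function
`E_{λ,μ}(z) = ∑_{j=0}^∞ z^j / Γ(λ j + μ)` is summable for every `z : ℂ`,
provided `λ > 0`. -/
theorem mittagLeffler_summable (l μ : ℝ) (hl : 0 < l) (z : ℂ) :
    Summable (fun j : ℕ => z ^ j / Complex.Gamma ((l * (j : ℝ) + μ : ℝ) : ℂ)) := by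
  set M : ℝ := 2 * (‖z‖ + 1) with hM
  have hz := norm_nonneg z
  have hM1 : 1 ≤ M := by linarith
  have hM0 : 0 < M := by linarith
  have hB : 1 ≤ M ^ (1 / l) := Real.one_le_rpow hM1 (by positivity)
  have hB0 : 0 < M ^ (1 / l) := by linarith
  have ht : Filter.Tendsto (fun j : ℕ => l * (j : ℝ) + μ) Filter.atTop Filter.atTop :=
    Filter.tendsto_atTop_add_const_right _ _
      (tendsto_natCast_atTop_atTop.const_mul_atTop hl)
  have hev := ht.eventually (ml_gamma_lower _ hB)
  set C : ℝ := (M ^ (1 / l)) ^ (μ - 2) with hC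
  have hC0 : 0 < C := Real.rpow_pos_of_pos hB0 _
  refine Summable.of_norm_bounded_eventually_nat (g := fun j => C⁻¹ * (1 / 2 : ℝ) ^ j)
    (summable_geometric_two.mul_left _) ?_
  filter_upwards [hev] with j hj
  have e : (M ^ (1 / l)) ^ (l * (j : ℝ) + μ - 2) = C * M ^ j := by
    rw [show l * (j : ℝ) + μ - 2 = (μ - 2) + l * j by ring, Real.rpow_add hB0,
      ← Real.rpow_mul hM0.le (1 / l) (l * j),
      show 1 / l * (l * (j : ℝ)) = j by field_simp, Real.rpow_natCast]
  rw [e] at hj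
  have hpos : 0 < C * M ^ j := by positivity
  rw [Complex.Gamma_ofReal, norm_div, norm_pow, Complex.norm_real, Real.norm_eq_abs,
    abs_of_pos (hpos.trans_le hj)]
  calc ‖z‖ ^ j / Real.Gamma (l * j + μ) ≤ ‖z‖ ^ j / (C * M ^ j) := by gcongr
    _ = C⁻¹ * (‖z‖ / M) ^ j := by rw [div_pow]; field_simp
    _ ≤ C⁻¹ * (1 / 2 : ℝ) ^ j := by
      have h : ‖z‖ / M ≤ 1 / 2 := by
        rw [div_le_div_iff₀ hM0 two_pos]; linarith
      exact mul_le_mul_of_nonneg_left (pow_le_pow_left₀ (by positivity) h j) (by positivity)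
end

section
/- Let λ and μ be real numbers with λ > 0. Then the function E_{λ,μ} : ℂ → ℂ defined by E_{λ,μ}(z) = ∑_{j=0}^{∞} z^j / Γ(λ·j + μ) is analytic on all of ℂ (entire). -/
theorem gamma_ge_rpow (A : ℝ) (hA : 1 ≤ A) :
    ∀ᶠ x : ℝ in Filter.atTop, A ^ x ≤ Real.Gamma x := by
  have h0 := FloorSemiring.tendsto_pow_div_factorial_atTop A
  have h1 : ∀ᶠ n : ℕ in Filter.atTop, A ^ n / (n.factorial : ℝ) < (A ^ 2)⁻¹ :=
    h0.eventually_lt_const (by positivity)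
  have h2 : Filter.Tendsto (fun x : ℝ => ⌊x⌋₊ - 1) Filter.atTop Filter.atTop :=
    (Filter.tendsto_sub_atTop_nat 1).comp tendsto_nat_floor_atTop
  filter_upwards [h2.eventually h1, Filter.eventually_ge_atTop (2 : ℝ)] with x hx hx2
  have hf : 2 ≤ ⌊x⌋₊ := Nat.le_floor (by exact_mod_cast hx2)
  obtain ⟨n, hn⟩ : ∃ n, ⌊x⌋₊ = n + 1 := ⟨⌊x⌋₊ - 1, by omega⟩
  have hle : ((n : ℝ) + 1) ≤ x := by
    have := Nat.floor_le (show (0 : ℝ) ≤ x by linarith)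
    rw [hn] at this
    exact_mod_cast this
  have hlt : x ≤ ((n + 2 : ℕ) : ℝ) := by
    have := Nat.lt_floor_add_one x
    rw [hn] at this
    push_cast at this ⊢
    linarith
  have hn1 : (2 : ℝ) ≤ (n : ℝ) + 1 := by
    rw [hn] at hf
    exact_mod_cast hf
  rw [hn, Nat.add_sub_cancel] at hx
  have hfac : (0 : ℝ) < n.factorial := by positivity
  have hA0 : 0 < A := by linarith
  calc A ^ x ≤ A ^ ((n + 2 : ℕ) : ℝ) := Real.rpow_le_rpow_of_exponent_le hA hlt
    _ = A ^ n * A ^ 2 := by rw [Real.rpow_natCast, pow_add]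
    _ ≤ n.factorial := by
      rw [div_lt_iff₀ hfac, inv_mul_eq_div, lt_div_iff₀ (by positivity)] at hx
      exact hx.le
    _ = Real.Gamma ((n : ℝ) + 1) := (Real.Gamma_nat_eq_factorial n).symm
    _ ≤ Real.Gamma x :=
      Real.Gamma_strictMonoOn_Ici.monotoneOn hn1 (show (2 : ℝ) ≤ x from hx2) hle

theorem summable_ml (l μ : ℝ) (hl : 0 < l) (R : ℝ) (hR : 1 ≤ R) :
    Summable (fun j : ℕ => R ^ j / ‖Complex.Gamma ((l * (j : ℝ) + μ : ℝ) : ℂ)‖) := by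
  set A : ℝ := (2 * R) ^ (1 / l) with hAdef
  have hA : 1 ≤ A := Real.one_le_rpow (by linarith) (by positivity)
  have hA0 : 0 < A := by linarith
  have ht : Filter.Tendsto (fun j : ℕ => l * (j : ℝ) + μ) Filter.atTop Filter.atTop :=
    Filter.tendsto_atTop_add_const_right _ _
      (tendsto_natCast_atTop_atTop.const_mul_atTop hl)
  have hg : Summable (fun j : ℕ => (A ^ μ)⁻¹ * (1 / 2 : ℝ) ^ j) :=
    summable_geometric_two.mul_left _
  refine hg.of_norm_bounded_eventually_nat ?_
  filter_upwards [ht.eventually (gamma_ge_rpow A hA)] with j hj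
  have hAj : A ^ (l * (j : ℝ) + μ) = (2 * R) ^ j * A ^ μ := by
    rw [Real.rpow_add hA0, hAdef, ← Real.rpow_mul (by linarith), ← mul_assoc,
      one_div_mul_cancel hl.ne', one_mul, Real.rpow_natCast]
  rw [hAj] at hj
  have hμ : 0 < A ^ μ := by positivity
  have hpos : 0 < (2 * R) ^ j * A ^ μ := by positivity
  rw [Complex.Gamma_ofReal, Complex.norm_real, Real.norm_of_nonneg (hpos.le.trans hj),
    Real.norm_of_nonneg (div_nonneg (by positivity) (hpos.le.trans hj))]
  calc R ^ j / Real.Gamma (l * (j : ℝ) + μ) ≤ R ^ j / ((2 * R) ^ j * A ^ μ) := by gcongr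
    _ = (A ^ μ)⁻¹ * (1 / 2 : ℝ) ^ j := by
      have : R ≠ 0 := by linarith
      rw [mul_pow, div_pow, one_pow]
      field_simp

/-- The two-parameter Mittag-Leffler function
`E_{λ,μ}(z) = ∑_{j=0}^∞ z^j / Γ(λ j + μ)` (with `λ > 0`) is entire:
it is analytic at every point of `ℂ`. -/
theorem mittagLeffler_entire (l μ : ℝ) (hl : 0 < l) :
    ∀ z : ℂ, AnalyticAt ℂ
      (fun w : ℂ => ∑' j : ℕ, w ^ j / Complex.Gamma ((l * (j : ℝ) + μ : ℝ) : ℂ)) z := by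
  intro z
  have hd := Complex.differentiableOn_tsum_of_summable_norm
    (F := fun (j : ℕ) (w : ℂ) => w ^ j / Complex.Gamma ((l * (j : ℝ) + μ : ℝ) : ℂ))
    (U := Metric.ball 0 (‖z‖ + 1))
    (summable_ml l μ hl (‖z‖ + 1) (by linarith [norm_nonneg z]))
    (fun j => ((differentiable_id.pow j).div_const _).differentiableOn)
    Metric.isOpen_ball
    (fun j w hw => by
      rw [norm_div, norm_pow]
      have : ‖w‖ < ‖z‖ + 1 := by simpa using hw
      gcongr)
  exact hd.analyticAt (Metric.isOpen_ball.mem_nhds (by simp))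
end

section
/- Let λ and μ be real numbers with λ > 0, and let k be a natural number. Then for every complex number z, the k-th iterated derivative of the two-parameter Mittag-Leffler function satisfies E_{λ,μ}^{(k)}(z) = ∑_{j=0}^{∞} ((j+k)! / j!) · z^j / Γ(λ·j + λ·k + μ). -/
open Nat

lemma ml_summable_deriv (a : ℕ → ℂ) (h : ∀ r : ℝ, 0 ≤ r → Summable (fun j => ‖a j‖ * r ^ j))
    (r : ℝ) (hr : 0 ≤ r) :
    Summable (fun j : ℕ => ‖((j : ℂ) + 1) * a (j + 1)‖ * r ^ j) := by
  have h1 := (summable_nat_add_iff 1).2 (h (2 * (r + 1)) (by linarith))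
  refine Summable.of_nonneg_of_le (fun j => by positivity) (fun j => ?_) h1
  have e : ‖(j : ℂ) + 1‖ = (j : ℝ) + 1 := by
    have := Complex.norm_natCast (j + 1)
    push_cast at this
    exact this
  rw [norm_mul, e]
  have h2 : (j : ℝ) + 1 ≤ 2 ^ (j + 1) := by
    have := (Nat.lt_two_pow_self (n := j + 1)).le
    exact_mod_cast this
  have h3 : r ^ j ≤ (r + 1) ^ (j + 1) :=
    calc r ^ j ≤ (r + 1) ^ j := by gcongr; linarith
      _ ≤ (r + 1) ^ (j + 1) := pow_le_pow_right₀ (by linarith) (by omega)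
  calc ((j : ℝ) + 1) * ‖a (j + 1)‖ * r ^ j = ‖a (j + 1)‖ * (((j : ℝ) + 1) * r ^ j) := by ring
    _ ≤ ‖a (j + 1)‖ * (2 ^ (j + 1) * (r + 1) ^ (j + 1)) := by gcongr
    _ = _ := by rw [mul_pow]

lemma ml_hasDerivAt (a : ℕ → ℂ) (h : ∀ r : ℝ, 0 ≤ r → Summable (fun j => ‖a j‖ * r ^ j))
    (z : ℂ) :
    HasDerivAt (fun w : ℂ => ∑' j : ℕ, a j * w ^ j)
      (∑' j : ℕ, (((j : ℂ) + 1) * a (j + 1)) * z ^ j) z := by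
  set R : ℝ := ‖z‖ + 1 with hR
  have hR0 : 0 ≤ R := by positivity
  have hs := ml_summable_deriv a h R hR0
  have hu : Summable (fun j : ℕ => ‖(j : ℂ) * a j‖ * R ^ (j - 1)) := by
    rw [← summable_nat_add_iff 1]
    simpa using hs
  have hz : z ∈ Metric.ball (0 : ℂ) R := by simp [hR]
  have key := hasDerivAt_tsum_of_isPreconnected
    (g := fun j (w : ℂ) => a j * w ^ j) (g' := fun j (w : ℂ) => a j * ((j : ℂ) * w ^ (j - 1)))
    hu Metric.isOpen_ball (convex_ball (0 : ℂ) R).isPreconnected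
    (fun j y _ => (hasDerivAt_pow j y).const_mul (a j))
    (fun j y hy => by
      have : ‖y‖ ≤ R := by simpa using (mem_ball_zero_iff.1 hy).le
      rw [show a j * ((j : ℂ) * y ^ (j - 1)) = ((j : ℂ) * a j) * y ^ (j - 1) by ring, norm_mul,
        norm_pow]
      gcongr)
    hz
    (Summable.of_norm (by simpa [norm_mul, norm_pow] using h ‖z‖ (norm_nonneg z)))
    hz
  have hsum : Summable (fun j : ℕ => a j * ((j : ℂ) * z ^ (j - 1))) := by
    refine Summable.of_norm_bounded hu (fun j => ?_)
    rw [show a j * ((j : ℂ) * z ^ (j - 1)) = ((j : ℂ) * a j) * z ^ (j - 1) by ring, norm_mul,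
        norm_pow]
    have : ‖z‖ ≤ R := by linarith
    gcongr
  suffices hh : (∑' j : ℕ, (((j : ℂ) + 1) * a (j + 1)) * z ^ j) =
      ∑' j : ℕ, a j * ((j : ℂ) * z ^ (j - 1)) by
    rw [hh]
    exact key
  rw [hsum.tsum_eq_zero_add]
  simp only [Nat.cast_zero, zero_mul, mul_zero, zero_add]
  refine tsum_congr fun j => ?_
  push_cast
  ring

lemma ml_iteratedDeriv (k : ℕ) : ∀ (a : ℕ → ℂ)
    (_ : ∀ r : ℝ, 0 ≤ r → Summable (fun j => ‖a j‖ * r ^ j)) (z : ℂ),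
    iteratedDeriv k (fun w : ℂ => ∑' j : ℕ, a j * w ^ j) z =
      ∑' j : ℕ, (((j + k)! : ℂ) / (j ! : ℂ)) * a (j + k) * z ^ j := by
  induction k with
  | zero =>
    intro a _ z
    simp only [iteratedDeriv_zero, add_zero]
    refine tsum_congr fun j => ?_
    rw [div_self (by exact_mod_cast j.factorial_ne_zero), one_mul]
  | succ k ih =>
    intro a h z
    rw [iteratedDeriv_succ']
    have e : deriv (fun w : ℂ => ∑' j : ℕ, a j * w ^ j) =
        fun w => ∑' j : ℕ, (((j : ℂ) + 1) * a (j + 1)) * w ^ j :=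
      funext fun w => (ml_hasDerivAt a h w).deriv
    rw [e, ih (fun j => ((j : ℂ) + 1) * a (j + 1)) (ml_summable_deriv a h)]
    refine tsum_congr fun j => ?_
    rw [← add_assoc, Nat.factorial_succ]
    push_cast
    ring

lemma ml_gamma_bound (R : ℝ) (hR : 1 ≤ R) :
    ∀ᶠ x : ℝ in Filter.atTop, R ^ (x - 2) ≤ Real.Gamma x := by
  have h0 := FloorSemiring.tendsto_pow_div_factorial_atTop R
  have h1 : ∀ᶠ n : ℕ in Filter.atTop, R ^ n ≤ (n ! : ℝ) := by
    filter_upwards [h0.eventually_le_const one_pos] with n hn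
    rwa [div_le_one (by positivity)] at hn
  obtain ⟨N, hN⟩ := Filter.eventually_atTop.1 h1
  filter_upwards [Filter.eventually_ge_atTop ((N : ℝ) + 2)] with x hx
  have hx0 : 0 ≤ x := by linarith [(Nat.cast_nonneg N : (0 : ℝ) ≤ N)]
  have hfl : N + 2 ≤ ⌊x⌋₊ := Nat.le_floor (by push_cast; exact hx)
  obtain ⟨m, hm⟩ : ∃ m, ⌊x⌋₊ = m + 1 := ⟨⌊x⌋₊ - 1, by omega⟩
  have hle : ((m : ℝ) + 1) ≤ x := by
    have := Nat.floor_le hx0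
    rw [hm] at this; exact_mod_cast this
  have hlt : x < (m : ℝ) + 2 := by
    have := Nat.lt_floor_add_one x
    rw [hm] at this; push_cast at this; linarith
  have hm1 : (1 : ℝ) ≤ m := by
    have : 1 ≤ m := by omega
    exact_mod_cast this
  calc R ^ (x - 2) ≤ R ^ (m : ℝ) := Real.rpow_le_rpow_of_exponent_le hR (by linarith)
    _ = R ^ m := Real.rpow_natCast R m
    _ ≤ (m ! : ℝ) := hN m (by omega)
    _ = Real.Gamma (m + 1) := (Real.Gamma_nat_eq_factorial m).symm
    _ ≤ Real.Gamma x := Real.Gamma_strictMonoOn_Ici.monotoneOn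
        (by simp only [Set.mem_Ici]; linarith) (by simp only [Set.mem_Ici]; linarith) hle

lemma ml_summable (l μ : ℝ) (hl : 0 < l) (r : ℝ) (hr : 0 ≤ r) :
    Summable (fun j : ℕ => ‖(Complex.Gamma ((l * (j : ℝ) + μ : ℝ) : ℂ))⁻¹‖ * r ^ j) := by
  set q : ℝ := 2 * (r + 1) with hq
  have hq1 : 1 ≤ q := by linarith
  have hq0 : 0 < q := by linarith
  set R : ℝ := q ^ (1 / l) with hRd
  have hR : 1 ≤ R := Real.one_le_rpow hq1 (by positivity)
  have hR0 : 0 < R := by linarith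
  have ht : Filter.Tendsto (fun j : ℕ => l * (j : ℝ) + μ) Filter.atTop Filter.atTop :=
    Filter.tendsto_atTop_add_const_right _ _
      (tendsto_natCast_atTop_atTop.const_mul_atTop hl)
  have hb := ht.eventually (ml_gamma_bound R hR)
  have hg : Summable (fun j : ℕ => (R ^ (μ - 2))⁻¹ * (1 / 2 : ℝ) ^ j) :=
    summable_geometric_two.mul_left _
  refine Summable.of_norm_bounded_eventually_nat hg ?_
  filter_upwards [hb] with j hj
  have e : R ^ (l * (j : ℝ) + μ - 2) = q ^ j * R ^ (μ - 2) := by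
    rw [show l * (j : ℝ) + μ - 2 = l * j + (μ - 2) by ring, Real.rpow_add hR0, hRd,
      ← Real.rpow_mul hq0.le, show 1 / l * (l * (j : ℝ)) = j by field_simp, Real.rpow_natCast]
  rw [e] at hj
  have hP : 0 < R ^ (μ - 2) := Real.rpow_pos_of_pos hR0 _
  have hG : 0 < Real.Gamma (l * (j : ℝ) + μ) := lt_of_lt_of_le (by positivity) hj
  rw [Complex.Gamma_ofReal, norm_inv, Complex.norm_real, Real.norm_of_nonneg hG.le,
    Real.norm_of_nonneg (by positivity)]
  calc (Real.Gamma (l * (j : ℝ) + μ))⁻¹ * r ^ j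
      ≤ (q ^ j * R ^ (μ - 2))⁻¹ * (r + 1) ^ j := by
        gcongr
        linarith
    _ = (R ^ (μ - 2))⁻¹ * (1 / 2 : ℝ) ^ j := by
        rw [hq, mul_pow, one_div, inv_pow]
        have : (r + 1) ^ j ≠ 0 := by positivity
        field_simp

/-- The `k`-th derivative of the two-parameter Mittag-Leffler function:
`E_{λ,μ}^{(k)}(z) = ∑_{j=0}^∞ ((j+k)!/j!) · z^j / Γ(λ j + λ k + μ)` for `λ > 0`. -/
theorem mittagLeffler_iteratedDeriv (l μ : ℝ) (hl : 0 < l) (k : ℕ) (z : ℂ) :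
    iteratedDeriv k
      (fun w : ℂ => ∑' j : ℕ, w ^ j / Complex.Gamma ((l * (j : ℝ) + μ : ℝ) : ℂ)) z =
    ∑' j : ℕ, (((j + k)! : ℂ) / (j ! : ℂ)) * z ^ j /
      Complex.Gamma ((l * (j : ℝ) + l * (k : ℝ) + μ : ℝ) : ℂ) := by
  have key := ml_iteratedDeriv k
    (fun j => (Complex.Gamma ((l * (j : ℝ) + μ : ℝ) : ℂ))⁻¹) (ml_summable l μ hl) z
  have e : (fun w : ℂ => ∑' j : ℕ, w ^ j / Complex.Gamma ((l * (j : ℝ) + μ : ℝ) : ℂ)) =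
      fun w : ℂ => ∑' j : ℕ, (Complex.Gamma ((l * (j : ℝ) + μ : ℝ) : ℂ))⁻¹ * w ^ j := by
    funext w
    refine tsum_congr fun j => ?_
    rw [div_eq_mul_inv, mul_comm]
  rw [e, key]
  refine tsum_congr fun j => ?_
  rw [show l * ((j + k : ℕ) : ℝ) + μ = l * (j : ℝ) + l * (k : ℝ) + μ by push_cast; ring]
  rw [div_eq_mul_inv _ (Complex.Gamma _)]
  ring
end

section
/- Let a₂, a₁, a₀ > 0 be real numbers and let α > β > 0. For every t ≥ 0, set x = −(a₁/a₂)·t^{α−β}. Then for every natural number m the inner series S_m = ∑_{j=0}^{∞} ((j+m)!/j!) · x^j / Γ((α−β)·(j+m) + α + β·m + 1) is summable, and moreover the outer series ∑_{m=0}^{∞} ((−1)^m/m!) · (a₀/a₂)^m · t^{α(m+1)} · S_m defining the unit step response y(t) of the fractional-order system is summable. -/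
open Nat

lemma aux_gamma_lower (R s : ℝ) (hR : 0 < R) (hs : 1 ≤ s) :
    R ^ (s - 1) * Real.exp (-R) ≤ Real.Gamma s := by
  rw [Real.Gamma_eq_integral (by linarith)]
  have hint := Real.GammaIntegral_convergent (s := s) (by linarith)
  have hsub : Set.Ioi R ⊆ Set.Ioi 0 := Set.Ioi_subset_Ioi hR.le
  have h1 : ∫ x in Set.Ioi R, Real.exp (-x) * x ^ (s - 1) ≤
      ∫ x in Set.Ioi 0, Real.exp (-x) * x ^ (s - 1) := by
    apply MeasureTheory.setIntegral_mono_set hint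
    · filter_upwards [MeasureTheory.ae_restrict_mem measurableSet_Ioi] with x hx
      have : (0:ℝ) < x := hx
      simp only [Pi.zero_apply]
      positivity
    · exact hsub.eventuallyLE
  refine le_trans ?_ h1
  have h2 : R ^ (s - 1) * Real.exp (-R) = ∫ x in Set.Ioi R, Real.exp (-x) * R ^ (s - 1) := by
    rw [MeasureTheory.integral_mul_const, integral_exp_neg_Ioi, mul_comm]
  rw [h2]
  apply MeasureTheory.setIntegral_mono_on
  · exact (integrableOn_exp_neg_Ioi R).mul_const _
  · exact hint.mono_set hsub
  · exact measurableSet_Ioi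
  · intro x hx
    have : R < x := hx
    gcongr

lemma aux_term (α β A R : ℝ) (hβ : 0 < β) (hαβ : β < α) (hA : 0 ≤ A) (hR : 0 < R)
    (hP : 4 * A ≤ R ^ (α - β)) (m j : ℕ) :
    ‖(((j + m)! : ℝ) / (j ! : ℝ)) * (-A) ^ j /
          Real.Gamma ((α - β) * ((j : ℝ) + (m : ℝ)) + α + β * (m : ℝ) + 1)‖
      ≤ (m ! : ℝ) * 2 ^ m * Real.exp R / (R ^ α) ^ (m + 1) * (1 / 2) ^ j := by
  have hd : 0 < α - β := by linarith
  have hα : 0 < α := by linarith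
  set P := R ^ (α - β) with hPdef
  set Q := R ^ α with hQdef
  have hP0 : 0 < P := by positivity
  have hQ0 : 0 < Q := by positivity
  set s := (α - β) * ((j : ℝ) + (m : ℝ)) + α + β * (m : ℝ) + 1 with hs
  have hs1 : 1 ≤ s := by
    have : 0 ≤ (α - β) * ((j : ℝ) + (m : ℝ)) + α + β * (m : ℝ) := by positivity
    linarith
  have hG := aux_gamma_lower R s hR hs1
  have hpow : R ^ (s - 1) = P ^ j * Q ^ (m + 1) := by
    rw [hPdef, hQdef, ← Real.rpow_natCast, ← Real.rpow_natCast, ← Real.rpow_mul hR.le,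
      ← Real.rpow_mul hR.le, ← Real.rpow_add hR]
    congr 1
    rw [hs]; push_cast; ring
  rw [hpow, Real.exp_neg] at hG
  have hG0 : 0 < Real.Gamma s := Real.Gamma_pos_of_pos (by linarith)
  have hch : ((j + m)! : ℝ) / (j ! : ℝ) ≤ (m ! : ℝ) * 2 ^ (j + m) := by
    rw [div_le_iff₀ (by positivity)]
    have h1 := Nat.add_choose_mul_factorial_mul_factorial j m
    have h2 : (j + m).choose m ≤ 2 ^ (j + m) := Nat.choose_le_two_pow _ _
    have h3 : (j + m)! ≤ m ! * 2 ^ (j + m) * j ! := by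
      rw [← h1]
      calc (j + m).choose m * j ! * m ! ≤ 2 ^ (j + m) * j ! * m ! := by gcongr
        _ = _ := by ring
    exact_mod_cast h3
  rw [norm_div, norm_mul, norm_pow, norm_neg, Real.norm_of_nonneg hA, Real.norm_of_nonneg hG0.le,
    Real.norm_of_nonneg (by positivity)]
  have hAP : (2 * A) ^ j ≤ (P / 2) ^ j := by
    gcongr
    linarith
  calc ((j + m)! : ℝ) / (j ! : ℝ) * A ^ j / Real.Gamma s
      ≤ (m ! : ℝ) * 2 ^ (j + m) * A ^ j / (P ^ j * Q ^ (m + 1) * (Real.exp R)⁻¹) := by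
        gcongr
    _ = (m ! : ℝ) * 2 ^ m * (2 * A) ^ j / (P ^ j * Q ^ (m + 1) * (Real.exp R)⁻¹) := by
        rw [mul_pow, pow_add]; ring
    _ ≤ (m ! : ℝ) * 2 ^ m * (P / 2) ^ j / (P ^ j * Q ^ (m + 1) * (Real.exp R)⁻¹) := by
        gcongr
    _ = _ := by
        rw [div_pow, div_pow, one_pow]
        field_simp

/-- Summability of the double series giving the analytical unit step response
of the fractional-order system `a₂ y^{(α)} + a₁ y^{(β)} + a₀ y = u`:
for `x = −(a₁/a₂)·t^{α−β}`, each inner Mittag-Leffler-derivative series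
`S_m = ∑_j ((j+m)!/j!)·x^j/Γ((α−β)(j+m)+α+βm+1)` is summable, and the outer
series `∑_m ((−1)^m/m!)·(a₀/a₂)^m·t^{α(m+1)}·S_m` is summable as well. -/
theorem step_response_series_summable (a₂ a₁ a₀ α β : ℝ)
    (ha₂ : 0 < a₂) (ha₁ : 0 < a₁) (ha₀ : 0 < a₀)
    (hβ : 0 < β) (hαβ : β < α) (t : ℝ) (ht : 0 ≤ t) :
    (∀ m : ℕ, Summable (fun j : ℕ =>
        (((j + m)! : ℝ) / (j ! : ℝ)) * (-(a₁ / a₂) * t ^ (α - β)) ^ j /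
          Real.Gamma ((α - β) * ((j : ℝ) + (m : ℝ)) + α + β * (m : ℝ) + 1))) ∧
    Summable (fun m : ℕ =>
      ((-1 : ℝ) ^ m / (m ! : ℝ)) * (a₀ / a₂) ^ m * t ^ (α * ((m : ℝ) + 1)) *
        ∑' j : ℕ, (((j + m)! : ℝ) / (j ! : ℝ)) * (-(a₁ / a₂) * t ^ (α - β)) ^ j /
          Real.Gamma ((α - β) * ((j : ℝ) + (m : ℝ)) + α + β * (m : ℝ) + 1)) := by
  have hα : 0 < α := by linarith
  set A := a₁ / a₂ * t ^ (α - β) with hAdef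
  have hA : 0 ≤ A := by positivity
  have hneg : -(a₁ / a₂) * t ^ (α - β) = -A := by rw [hAdef]; ring
  set B := a₀ / a₂ * t ^ α with hBdef
  have hB : 0 ≤ B := by positivity
  obtain ⟨R, hR, hP, hQ⟩ : ∃ R : ℝ, 0 < R ∧ 4 * A ≤ R ^ (α - β) ∧ 4 * B ≤ R ^ α :=
    ((Filter.eventually_gt_atTop (0:ℝ)).and
      (((tendsto_rpow_atTop (sub_pos.2 hαβ)).eventually_ge_atTop (4 * A)).and
        ((tendsto_rpow_atTop hα).eventually_ge_atTop (4 * B)))).exists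
  rw [hneg]
  have hterm := aux_term α β A R hβ hαβ hA hR hP
  have hgeo : Summable (fun j : ℕ => ((1:ℝ) / 2) ^ j) := summable_geometric_two
  refine ⟨fun m => Summable.of_norm_bounded (hgeo.mul_left _) (hterm m), ?_⟩
  set Q := R ^ α with hQdef
  have hQ0 : 0 < Q := by positivity
  refine Summable.of_norm_bounded
    (hgeo.mul_left (2 * Real.exp R * t ^ α / Q)) (fun m => ?_)
  have hS := tsum_of_norm_bounded
    (hasSum_geometric_two.mul_left ((m ! : ℝ) * 2 ^ m * Real.exp R / Q ^ (m + 1))) (hterm m)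
  have htp : t ^ (α * ((m : ℝ) + 1)) = (t ^ α) ^ (m + 1) := by
    rw [Real.rpow_mul ht, ← Real.rpow_natCast]; push_cast; rfl
  have hT : 0 ≤ t ^ α := by positivity
  have hBQ : (2 * B) ^ m ≤ (Q / 2) ^ m := by
    gcongr
    linarith
  rw [norm_mul, htp, norm_mul, norm_mul, norm_div, norm_pow, norm_neg, norm_one, one_pow,
    Real.norm_of_nonneg (show (0:ℝ) ≤ (m ! : ℝ) by positivity),
    Real.norm_of_nonneg (show (0:ℝ) ≤ (a₀ / a₂) ^ m by positivity),
    Real.norm_of_nonneg (show (0:ℝ) ≤ (t ^ α) ^ (m + 1) by positivity)]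
  calc _ ≤ 1 / (m ! : ℝ) * (a₀ / a₂) ^ m * (t ^ α) ^ (m + 1) *
        ((m ! : ℝ) * 2 ^ m * Real.exp R / Q ^ (m + 1) * 2) := by gcongr
    _ = 2 * Real.exp R * t ^ α / Q * ((2 * B) ^ m / Q ^ m) := by
        have : (m ! : ℝ) ≠ 0 := by positivity
        rw [hBdef, mul_pow, mul_pow, pow_succ, pow_succ]
        field_simp
    _ ≤ 2 * Real.exp R * t ^ α / Q * ((Q / 2) ^ m / Q ^ m) := by gcongr
    _ = _ := by
        rw [div_pow, div_pow, one_pow]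
        field_simp
end
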